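/- Let d ≥ 1, let Λ ⊆ ℤ^d be a submodule of rank δ ≥ 1, and let a : ℤ^d → ℂ be square-summable with a_k = 0 for all k ∉ Λ and ‖u‖² = Σ_{k∈Λ} |a_k|². Then b_u(l,s) = 0 whenever l ∉ Λ, and Σ_{(l,s)∈ℤ^d×ℤ} |b_u(l,s)|^{δ+1} ≤ 2^δ · ‖u‖^{2(δ+1)}. -/

import Mathlib

open scoped BigOperators
open Matrix

/-- The space-time Fourier coefficients of `|e^{itΔ}u|²`, where `a` are the Fourier
coefficients of `u`: `b_u(l,s) = Σ_{k : |k-l|²-|k|² = s} a_k conj(a_{k-l})`. -/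
noncomputable def bcoef {d : ℕ} (a : (Fin d → ℤ) → ℂ) (l : Fin d → ℤ) (s : ℤ) : ℂ :=
  ∑' k : Fin d → ℤ,
    if (k - l) ⬝ᵥ (k - l) - k ⬝ᵥ k = s then a k * (starRingEnd ℂ) (a (k - l)) else 0

/-!
Expanding the power `δ + 1` turns the left-hand side into a sum of
`∏ i, |a (k i)| * |a (k i - l)|` over shifts `l` and tuples `k` of `δ + 1` points of `Λ` whose
pairwise differences are orthogonal to `l`. The terms with `l = 0` contribute `‖u‖ ^ (2 * (δ + 1))`.
If `l ≠ 0`, the `δ` differences `k i - k 0` lie in the hyperplane `l^⊥` of a lattice of rank `δ`,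
so some point `k j` with `j ≠ 0` lies in the rational affine span of the others. As `l` is
orthogonal to this span, `k j` is the orthogonal projection onto it of `k j - l`, so `(l, k)` can be
recovered after replacing the entry `k j` of `k` by `k j - l`; similarly after replacing all the
other entries `k i` by `k i - l`. The summand is the product of `∏ |a|` over these two tuples, and
Cauchy–Schwarz bounds the contribution of each of the `δ` indices `j` by `‖u‖ ^ (2 * (δ + 1))`.
-/

open scoped ENNReal

section ExtendedSums

lemma two_mul_mul_le_sq_add_sq {R : Type*} [CommSemiring R] [LinearOrder R]
    [CanonicallyOrderedAdd R] (a b : R) : 2 * (a * b) ≤ a ^ 2 + b ^ 2 := by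
  wlog hab : a ≤ b generalizing a b
  · simpa only [mul_comm b, add_comm (b ^ 2)] using this b a (le_of_not_ge hab)
  obtain ⟨c, rfl⟩ := exists_add_of_le hab
  calc 2 * (a * (a + c)) ≤ 2 * (a * (a + c)) + c ^ 2 := le_self_add
    _ = a ^ 2 + (a + c) ^ 2 := by ring

variable {α β : Type*}

lemma tsum_mul_comp_le_tsum_sq {E : Set α} {φ ψ : α → β} (hφ : Set.InjOn φ E)
    (hψ : Set.InjOn ψ E) (f : β → ℝ≥0∞) :
    ∑' x : E, f (φ x) * f (ψ x) ≤ ∑' y, f y ^ 2 := by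
  refine (ENNReal.mul_le_mul_iff_right two_ne_zero ENNReal.ofNat_ne_top).1 ?_
  calc 2 * ∑' x : E, f (φ x) * f (ψ x)
      ≤ ∑' x : E, (f (φ x) ^ 2 + f (ψ x) ^ 2) := by
        rw [← ENNReal.tsum_mul_left]
        exact ENNReal.tsum_le_tsum fun x => two_mul_mul_le_sq_add_sq _ _
    _ = ∑' x : E, f (φ x) ^ 2 + ∑' x : E, f (ψ x) ^ 2 := ENNReal.tsum_add
    _ ≤ ∑' y, f y ^ 2 + ∑' y, f y ^ 2 := add_le_add
        (ENNReal.tsum_comp_le_tsum_of_injective hφ.injective fun y => f y ^ 2)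
        (ENNReal.tsum_comp_le_tsum_of_injective hψ.injective fun y => f y ^ 2)
    _ = 2 * ∑' y, f y ^ 2 := (two_mul _).symm

lemma tsum_mem_eq_tsum_of_notMem {S N : Type*} [SetLike S α] [AddCommMonoid N]
    [TopologicalSpace N] {t : S} {f : α → N} (hf : ∀ x, x ∉ t → f x = 0) :
    ∑' x : t, f x = ∑' x, f x :=
  tsum_subtype_eq_of_support_subset (s := (t : Set α)) fun x hx =>
    not_not.1 fun hxt => hx (hf x hxt)

lemma tsum_pow_eq_tsum_prod (f : α → ℝ≥0∞) (n : ℕ) :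
    (∑' x, f x) ^ n = ∑' k : Fin n → α, ∏ i, f (k i) := by
  induction n with
  | zero => simp
  | succ n ih =>
    calc (∑' x, f x) ^ (n + 1) = ∑' x, ∑' k : Fin n → α, f x * ∏ i, f (k i) := by
          simp only [pow_succ', ih, ENNReal.tsum_mul_left, ENNReal.tsum_mul_right]
      _ = ∑' p : α × (Fin n → α), f p.1 * ∏ i, f (p.2 i) := ENNReal.tsum_prod.symm
      _ = ∑' k : Fin (n + 1) → α, ∏ i, f (k i) := by
          rw [← (Fin.consEquiv fun _ : Fin (n + 1) => α).tsum_eq]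
          simp [Fin.prod_univ_succ, Fin.consEquiv]

lemma tsum_subtype_prod (S : Set (α × β)) (f : α → β → ℝ≥0∞) :
    ∑' p : S, f p.1.1 p.1.2 = ∑' a, ∑' b : Prod.mk a ⁻¹' S, f a b := by
  rw [tsum_subtype S fun p => f p.1 p.2, ENNReal.tsum_prod']
  exact tsum_congr fun a => (tsum_subtype (Prod.mk a ⁻¹' S) (f a)).symm

lemma tsum_tsum_fiber_pow (g : α → β) (f : α → ℝ≥0∞) (n : ℕ) :
    ∑' s, (∑' x : g ⁻¹' {s}, f x) ^ (n + 1) =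
      ∑' k : {k : Fin (n + 1) → α | ∀ i j, g (k i) = g (k j)}, ∏ i, f (k.1 i) := by
  classical
  have fiber_prod (s : β) (k : Fin (n + 1) → α) :
      ∏ i, (g ⁻¹' {s}).indicator f (k i) =
        if s = g (k 0) then
          {k : Fin (n + 1) → α | ∀ i j, g (k i) = g (k j)}.indicator (fun k => ∏ i, f (k i)) k
        else 0 := by
    by_cases hk : ∀ i, g (k i) = s
    · simp [hk]
    · obtain ⟨i, hi⟩ := not_forall.1 hk
      rw [Finset.prod_eq_zero (Finset.mem_univ i) (Set.indicator_of_notMem (s := g ⁻¹' {s}) hi f)]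
      split_ifs with hs
      · exact (Set.indicator_of_notMem (fun h => hi ((h i 0).trans hs.symm)) _).symm
      · rfl
  simp only [tsum_subtype (g ⁻¹' {_}) f, tsum_pow_eq_tsum_prod, fiber_prod]
  rw [ENNReal.tsum_comm, tsum_subtype _ fun k : Fin (n + 1) → α => ∏ i, f (k i)]
  exact tsum_congr fun k => tsum_ite_eq _ _

lemma tsum_ofReal_le_iff {f : α → ℝ} (hf : ∀ x, 0 ≤ f x) {C : ℝ} (hC : 0 ≤ C) :
    ∑' x, ENNReal.ofReal (f x) ≤ ENNReal.ofReal C ↔ Summable f ∧ ∑' x, f x ≤ C := by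
  constructor
  · intro h
    have hsum : Summable f := by
      simpa [ENNReal.toReal_ofReal, hf] using
        ENNReal.summable_toReal (h.trans_lt ENNReal.ofReal_lt_top).ne
    rw [← ENNReal.ofReal_tsum_of_nonneg hf hsum] at h
    exact ⟨hsum, (ENNReal.ofReal_le_ofReal_iff hC).1 h⟩
  · rintro ⟨hsum, h⟩
    rw [← ENNReal.ofReal_tsum_of_nonneg hf hsum]
    exact ENNReal.ofReal_le_ofReal h

end ExtendedSums

section LevelTuples

variable {R M : Type*} [CommRing R] [AddCommGroup M] [Module R M]
  (B : LinearMap.BilinForm R M)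

/-- The pairs of a shift `l` and a tuple `k` of points in a single level set of `B l`, i.e. with
all differences `k i - k j` orthogonal to `l`. -/
def levelTuples (ι : Type*) : Set (M × (ι → M)) :=
  {p | ∀ i j, B p.1 (p.2 i) = B p.1 (p.2 j)}

/-- The level tuples whose `j`-th point lies in the affine span of the other points. The latter is
expressed dually, by affine functionals `B w - c`, which avoids passing to the fraction field. -/
def dependentLevelTuples {ι : Type*} (j : ι) : Set (M × (ι → M)) :=
  {p ∈ levelTuples B ι | ∀ w c, (∀ i ≠ j, B w (p.2 i) = c) → B w (p.2 j) = c}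

/-- The tuple `k` with its `j`-th point translated by `-l`. -/
def shiftAt {ι : Type*} [DecidableEq ι] (j : ι) (p : M × (ι → M)) : ι → M :=
  Function.update p.2 j (p.2 j - p.1)

/-- The symmetry of the summand `∏ i, f (k i) * f (k i - l)` exchanging the tuples `k` and
`k - l`. -/
def reverseShift {ι : Type*} (p : M × (ι → M)) : M × (ι → M) :=
  (-p.1, fun i => p.2 i - p.1)

lemma reverseShift_involutive {ι : Type*} :
    Function.Involutive (reverseShift : M × (ι → M) → M × (ι → M)) := fun p => by
  simp [reverseShift]

variable {B} {ι : Type*}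

lemma reverseShift_mem_dependentLevelTuples {j : ι} {p : M × (ι → M)}
    (hp : p ∈ dependentLevelTuples B j) : reverseShift p ∈ dependentLevelTuples B j := by
  obtain ⟨hlevel, hdep⟩ := hp
  refine ⟨fun i i' => by simp [reverseShift, hlevel i i'], fun w c hw => ?_⟩
  simp only [reverseShift, map_sub, sub_eq_iff_eq_add] at hw ⊢
  exact hdep w _ hw

variable [DecidableEq ι]

lemma injOn_shiftAt (hB : ∀ x, B x x = 0 → x = 0) (j : ι) :
    Set.InjOn (shiftAt j) (dependentLevelTuples B j) := by
  rintro ⟨l, k⟩ ⟨hlevel, hdep⟩ ⟨l', k'⟩ ⟨hlevel', hdep'⟩ h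
  dsimp only at hlevel hdep hlevel' hdep'
  have k_eq : ∀ i ≠ j, k i = k' i := fun i hi => by
    simpa [shiftAt, hi] using congrFun h i
  have sub_eq : k j - l = k' j - l' := by simpa [shiftAt] using congrFun h j
  have level_sub : ∀ i ≠ j, B (l - l') (k i) = B l (k j) - B l' (k' j) := fun i hi => by
    rw [map_sub, LinearMap.sub_apply, hlevel i j, k_eq i hi, hlevel' i j]
  have level_sub' : ∀ i ≠ j, B (l - l') (k' i) = B l (k j) - B l' (k' j) := fun i hi => by
    rw [← k_eq i hi, level_sub i hi]
  have orth : B (l - l') (l - l') = 0 :=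
    calc B (l - l') (l - l') = B (l - l') (k j) - B (l - l') (k' j) := by
          rw [← map_sub, sub_eq_sub_iff_sub_eq_sub.1 sub_eq]
      _ = 0 := by rw [hdep _ _ level_sub, hdep' _ _ level_sub', sub_self]
  obtain rfl : l = l' := sub_eq_zero.1 (hB _ orth)
  refine Prod.ext rfl (funext fun i => ?_)
  obtain rfl | hi := eq_or_ne i j
  · exact sub_left_injective sub_eq
  · exact k_eq i hi

lemma injOn_shiftAt_reverseShift (hB : ∀ x, B x x = 0 → x = 0) (j : ι) :
    Set.InjOn (fun p => shiftAt j (reverseShift p)) (dependentLevelTuples B j) :=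
  (injOn_shiftAt hB j).comp reverseShift_involutive.injective.injOn
    fun _ => reverseShift_mem_dependentLevelTuples

lemma prod_mul_sub_eq_shiftAt_mul {N : Type*} [CommMonoid N] [Fintype ι] (f : M → N) (j : ι)
    (p : M × (ι → M)) :
    ∏ i, f (p.2 i) * f (p.2 i - p.1) =
      (∏ i, f (shiftAt j p i)) * ∏ i, f (shiftAt j (reverseShift p) i) := by
  rw [← Finset.prod_mul_distrib]
  refine Finset.prod_congr rfl fun i _ => ?_
  obtain rfl | hi := eq_or_ne i j
  · simp [shiftAt, reverseShift, mul_comm]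
  · simp [shiftAt, reverseShift, hi]

lemma tsum_dependentLevelTuples_le {n : ℕ} (hB : ∀ x, B x x = 0 → x = 0) (f : M → ℝ≥0∞)
    (j : Fin n) :
    ∑' p : dependentLevelTuples B j, ∏ i, f (p.1.2 i) * f (p.1.2 i - p.1.1) ≤
      (∑' x, f x ^ 2) ^ n := by
  simp only [prod_mul_sub_eq_shiftAt_mul f j, tsum_pow_eq_tsum_prod, Finset.prod_pow]
  exact tsum_mul_comp_le_tsum_sq (injOn_shiftAt hB j) (injOn_shiftAt_reverseShift hB j)
    fun k => ∏ i, f (k i)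

lemma tsum_fst_eq_zero_le {n : ℕ} (f : M → ℝ≥0∞) :
    ∑' p : {p : M × (Fin n → M) | p.1 = 0}, ∏ i, f (p.1.2 i) * f (p.1.2 i - p.1.1) ≤
      (∑' x, f x ^ 2) ^ n := by
  have injOn_snd : Set.InjOn Prod.snd {p : M × (Fin n → M) | p.1 = 0} :=
    fun p hp q hq h => Prod.ext (hp.trans hq.symm) h
  calc ∑' p : {p : M × (Fin n → M) | p.1 = 0}, ∏ i, f (p.1.2 i) * f (p.1.2 i - p.1.1)
      = ∑' p : {p : M × (Fin n → M) | p.1 = 0}, (∏ i, f (p.1.2 i)) * ∏ i, f (p.1.2 i) :=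
        tsum_congr fun ⟨p, (hp : p.1 = 0)⟩ => by simp [hp, Finset.prod_mul_distrib]
    _ ≤ ∑' k : Fin n → M, (∏ i, f (k i)) ^ 2 :=
        tsum_mul_comp_le_tsum_sq injOn_snd injOn_snd fun k => ∏ i, f (k i)
    _ = (∑' x, f x ^ 2) ^ n := by simp only [tsum_pow_eq_tsum_prod, Finset.prod_pow]

end LevelTuples

section TimeFrequency

variable {R M : Type*} [CommRing R] [AddCommGroup M] [Module R M]

/-- The frequency `s = |k - l|² - |k|²` in time at which the modes `k` and `k - l` of `u` contribute
to the space-time Fourier coefficient `b_u(l,s)`, for a general bilinear form `B` in place of the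
Euclidean one. -/
def timeFrequency (B : LinearMap.BilinForm R M) (l k : M) : R :=
  B (k - l) (k - l) - B k k

variable [NoZeroDivisors R] [NeZero (2 : R)] {B : LinearMap.BilinForm R M}

lemma timeFrequency_eq_iff (hB : B.IsSymm) {l k k' : M} :
    timeFrequency B l k = timeFrequency B l k' ↔ B l k = B l k' := by
  have expand (k : M) : timeFrequency B l k = B l l - 2 * B l k := by
    simp only [timeFrequency, map_sub, LinearMap.sub_apply, hB.eq k l]
    ring
  rw [expand, expand, sub_right_inj, mul_right_inj' two_ne_zero]

lemma tsum_timeFrequency_fiber_pow (hB : B.IsSymm) (f : M → ℝ≥0∞) (n : ℕ) :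
    ∑' l, ∑' s, (∑' k : timeFrequency B l ⁻¹' {s}, f k * f (k - l)) ^ (n + 1) =
      ∑' p : levelTuples B (Fin (n + 1)), ∏ i, f (p.1.2 i) * f (p.1.2 i - p.1.1) := by
  have level_eq (l : M) :
      {k : Fin (n + 1) → M | ∀ i j, timeFrequency B l (k i) = timeFrequency B l (k j)} =
        Prod.mk l ⁻¹' levelTuples B (Fin (n + 1)) :=
    Set.ext fun _ => forall₂_congr fun _ _ => timeFrequency_eq_iff hB
  rw [tsum_subtype_prod _ fun (l : M) (k : Fin (n + 1) → M) => ∏ i, f (k i) * f (k i - l)]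
  refine tsum_congr fun l => ?_
  rw [tsum_tsum_fiber_pow (timeFrequency B l) fun k => f k * f (k - l), level_eq]

end TimeFrequency

section Rank

variable {R M : Type*} [CommRing R] [IsDomain R] [AddCommGroup M] [Module R M] [Module.Finite R M]
  {B : LinearMap.BilinForm R M}

open Module (finrank)

lemma not_linearIndependent_of_orthogonal {l : M} (hl : B l l ≠ 0) {v : Fin (finrank R M) → M}
    (hv : ∀ i, B l (v i) = 0) : ¬ LinearIndependent R v := by
  intro hind
  have span_le : Submodule.span R (Set.range v) ≤ LinearMap.ker (B l) :=
    Submodule.span_le.2 (Set.range_subset_iff.2 hv)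
  have hcons : LinearIndependent R (Fin.cons l v : Fin (finrank R M + 1) → M) := by
    refine hind.finCons' l v fun c y hy hcy => ?_
    have hBy : B l y = 0 := span_le hy
    have hBcy := congrArg (B l) hcy
    rw [map_add, map_smul, hBy, add_zero, map_zero, smul_eq_mul] at hBcy
    exact (mul_eq_zero.1 hBcy).resolve_right hl
  simpa using hcons.fintype_card_le_finrank

lemma exists_mem_dependentLevelTuples {l : M} (hl : B l l ≠ 0) {k : Fin (finrank R M + 1) → M}
    (hk : (l, k) ∈ levelTuples B _) :
    ∃ j : Fin (finrank R M), (l, k) ∈ dependentLevelTuples B j.succ := by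
  have hdep : ¬ LinearIndependent R fun i : Fin (finrank R M) => k i.succ - k 0 :=
    not_linearIndependent_of_orthogonal hl fun i => by rw [map_sub, hk i.succ 0, sub_self]
  obtain ⟨g, hg, j, hgj⟩ := Fintype.not_linearIndependent_iff.1 hdep
  refine ⟨j, hk, fun w c hw => ?_⟩
  have hzero : B w (k 0) = c := hw 0 (Fin.succ_ne_zero j).symm
  have hsum : ∑ i, g i * (B w (k i.succ) - c) = 0 := by
    simpa [hzero] using congrArg (B w) hg
  rw [Finset.sum_eq_single j (fun i _ hij => by
    rw [hw i.succ (Fin.succ_injective _ |>.ne hij), sub_self, mul_zero]) (by simp)] at hsum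
  exact sub_eq_zero.1 ((mul_eq_zero.1 hsum).resolve_left hgj)

lemma levelTuples_subset (hB : ∀ x, B x x = 0 → x = 0) :
    levelTuples B (Fin (finrank R M + 1)) ⊆
      {p | p.1 = 0} ∪ ⋃ j : Fin (finrank R M), dependentLevelTuples B j.succ := by
  rintro ⟨l, k⟩ hlk
  by_cases hl : l = 0
  · exact Or.inl hl
  · exact Or.inr (Set.mem_iUnion.2 (exists_mem_dependentLevelTuples (mt (hB l) hl) hlk))

theorem tsum_levelTuples_le (hB : ∀ x, B x x = 0 → x = 0) (f : M → ℝ≥0∞) :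
    ∑' p : levelTuples B (Fin (finrank R M + 1)), ∏ i, f (p.1.2 i) * f (p.1.2 i - p.1.1) ≤
      (finrank R M + 1) * (∑' x, f x ^ 2) ^ (finrank R M + 1) := by
  let F (p : M × (Fin (finrank R M + 1) → M)) : ℝ≥0∞ := ∏ i, f (p.2 i) * f (p.2 i - p.1)
  calc ∑' p : levelTuples B (Fin (finrank R M + 1)), F p
      ≤ ∑' p : {p : M × (Fin (finrank R M + 1) → M) | p.1 = 0}, F p +
          ∑ j : Fin (finrank R M), ∑' p : dependentLevelTuples B j.succ, F p :=
        (ENNReal.tsum_mono_subtype F (levelTuples_subset hB)).trans <|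
          (ENNReal.tsum_union_le F _ _).trans (by gcongr; exact ENNReal.tsum_iUnion_le F _)
    _ ≤ (∑' x, f x ^ 2) ^ (finrank R M + 1) +
          ∑ _j : Fin (finrank R M), (∑' x, f x ^ 2) ^ (finrank R M + 1) :=
        add_le_add (tsum_fst_eq_zero_le f)
          (Finset.sum_le_sum fun j _ => tsum_dependentLevelTuples_le hB f j.succ)
    _ = (finrank R M + 1) * (∑' x, f x ^ 2) ^ (finrank R M + 1) := by
        simp [add_mul, add_comm]

theorem tsum_timeFrequency_fiber_pow_le [NeZero (2 : R)] (hsymm : B.IsSymm)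
    (hB : ∀ x, B x x = 0 → x = 0) (f : M → ℝ≥0∞) :
    ∑' l, ∑' s, (∑' k : timeFrequency B l ⁻¹' {s}, f k * f (k - l)) ^ (finrank R M + 1) ≤
      (finrank R M + 1) * (∑' x, f x ^ 2) ^ (finrank R M + 1) :=
  (tsum_timeFrequency_fiber_pow hsymm f _).trans_le (tsum_levelTuples_le hB f)

end Rank

section Bcoef

open Module (finrank)

variable {d : ℕ} {a : (Fin d → ℤ) → ℂ} {Λ : Submodule ℤ (Fin d → ℤ)}

variable (Λ) in
/-- The Euclidean inner product on the lattice `Λ`, as an integral bilinear form. -/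
def dotProductForm : LinearMap.BilinForm ℤ Λ :=
  LinearMap.BilinForm.restrict (dotProductBilin ℤ ℤ) Λ

lemma dotProductForm_isSymm : (dotProductForm Λ).IsSymm :=
  ⟨fun x y => dotProduct_comm (x : Fin d → ℤ) y⟩

lemma dotProductForm_self_eq_zero {x : Λ} (hx : dotProductForm Λ x x = 0) : x = 0 :=
  Subtype.ext (dotProduct_self_eq_zero.1 hx)

lemma bcoef_eq_zero_of_notMem (hsupp : ∀ k, k ∉ Λ → a k = 0) {l : Fin d → ℤ} (hl : l ∉ Λ)
    (s : ℤ) : bcoef a l s = 0 := by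
  have hprod (k : Fin d → ℤ) : a k * (starRingEnd ℂ) (a (k - l)) = 0 := by
    by_cases hk : k ∈ Λ
    · rw [hsupp (k - l) (mt (Λ.sub_mem_iff_right hk).1 hl), map_zero, mul_zero]
    · rw [hsupp k hk, zero_mul]
  simp [bcoef, hprod]

lemma enorm_bcoef_le (hsupp : ∀ k, k ∉ Λ → a k = 0) (l : Λ) (s : ℤ) :
    ‖bcoef a l s‖ₑ ≤
      ∑' k : timeFrequency (dotProductForm Λ) l ⁻¹' {s}, ‖a k‖ₑ * ‖a (k - l : Λ)‖ₑ := by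
  classical
  let term (k : Fin d → ℤ) : ℂ :=
    if (k - l.1) ⬝ᵥ (k - l.1) - k ⬝ᵥ k = s then a k * (starRingEnd ℂ) (a (k - l.1)) else 0
  have term_eq_zero (k : Fin d → ℤ) (hk : k ∉ Λ) : ‖term k‖ₑ = 0 := by
    simp [term, hsupp k hk]
  calc ‖bcoef a l s‖ₑ ≤ ∑' k, ‖term k‖ₑ := enorm_tsum_le_tsum_enorm
    _ = ∑' k : Λ, ‖term k‖ₑ := (tsum_mem_eq_tsum_of_notMem term_eq_zero).symm
    _ = ∑' k : timeFrequency (dotProductForm Λ) l ⁻¹' {s}, ‖a k‖ₑ * ‖a (k - l : Λ)‖ₑ := by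
        rw [tsum_subtype _ fun k : Λ => ‖a k‖ₑ * ‖a (k - l : Λ)‖ₑ]
        refine tsum_congr fun k => ?_
        rw [Set.indicator_apply, apply_ite enorm, enorm_mul, RCLike.enorm_conj, enorm_zero]
        exact if_congr Iff.rfl rfl rfl

theorem tsum_enorm_bcoef_pow_le (hsupp : ∀ k, k ∉ Λ → a k = 0) :
    ∑' ls : (Fin d → ℤ) × ℤ, ‖bcoef a ls.1 ls.2‖ₑ ^ (finrank ℤ Λ + 1) ≤
      (finrank ℤ Λ + 1) * (∑' k, ‖a k‖ₑ ^ 2) ^ (finrank ℤ Λ + 1) := by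
  let f (k : Λ) : ℝ≥0∞ := ‖a k‖ₑ
  calc ∑' ls : (Fin d → ℤ) × ℤ, ‖bcoef a ls.1 ls.2‖ₑ ^ (finrank ℤ Λ + 1)
      = ∑' l, ∑' s, ‖bcoef a l s‖ₑ ^ (finrank ℤ Λ + 1) :=
        ENNReal.tsum_prod (f := fun l s => ‖bcoef a l s‖ₑ ^ (finrank ℤ Λ + 1))
    _ = ∑' l : Λ, ∑' s, ‖bcoef a l s‖ₑ ^ (finrank ℤ Λ + 1) := by
        refine (tsum_mem_eq_tsum_of_notMem fun l hl => ?_).symm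
        simp [bcoef_eq_zero_of_notMem hsupp hl]
    _ ≤ ∑' l : Λ, ∑' s, (∑' k : timeFrequency (dotProductForm Λ) l ⁻¹' {s},
          f k * f (k - l)) ^ (finrank ℤ Λ + 1) := by
        gcongr with l s
        exact enorm_bcoef_le hsupp l s
    _ ≤ (finrank ℤ Λ + 1) * (∑' k, f k ^ 2) ^ (finrank ℤ Λ + 1) :=
        tsum_timeFrequency_fiber_pow_le dotProductForm_isSymm
          (fun _ => dotProductForm_self_eq_zero) f
    _ = (finrank ℤ Λ + 1) * (∑' k, ‖a k‖ₑ ^ 2) ^ (finrank ℤ Λ + 1) := by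
        rw [← tsum_mem_eq_tsum_of_notMem (t := Λ) (f := fun k => ‖a k‖ₑ ^ 2)]
        simp +contextual [hsupp]

end Bcoef

theorem tsum_bcoef_pow_le_of_support_submodule_general {d : ℕ} (Λ : Submodule ℤ (Fin d → ℤ))
    (a : (Fin d → ℤ) → ℂ) (ha : Summable fun k => ‖a k‖ ^ 2) (hsupp : ∀ k, k ∉ Λ → a k = 0) :
    (∀ l, l ∉ Λ → ∀ s, bcoef a l s = 0) ∧
      (Summable fun ls : (Fin d → ℤ) × ℤ =>
        ‖bcoef a ls.1 ls.2‖ ^ (Module.finrank ℤ Λ + 1)) ∧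
      ∑' ls : (Fin d → ℤ) × ℤ, ‖bcoef a ls.1 ls.2‖ ^ (Module.finrank ℤ Λ + 1) ≤
        (Module.finrank ℤ Λ + 1) * (∑' k, ‖a k‖ ^ 2) ^ (Module.finrank ℤ Λ + 1) := by
  have hnorm : 0 ≤ ∑' k, ‖a k‖ ^ 2 := tsum_nonneg fun k => by positivity
  refine ⟨fun l hl s => bcoef_eq_zero_of_notMem hsupp hl s,
    (tsum_ofReal_le_iff (fun _ => by positivity) (by positivity)).1 ?_⟩
  calc ∑' ls : (Fin d → ℤ) × ℤ, ENNReal.ofReal (‖bcoef a ls.1 ls.2‖ ^ (Module.finrank ℤ Λ + 1))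
      = ∑' ls : (Fin d → ℤ) × ℤ, ‖bcoef a ls.1 ls.2‖ₑ ^ (Module.finrank ℤ Λ + 1) := by
        simp only [ENNReal.ofReal_pow, norm_nonneg, ofReal_norm]
    _ ≤ (Module.finrank ℤ Λ + 1) * (∑' k, ‖a k‖ₑ ^ 2) ^ (Module.finrank ℤ Λ + 1) :=
        tsum_enorm_bcoef_pow_le hsupp
    _ = ENNReal.ofReal
          ((Module.finrank ℤ Λ + 1) * (∑' k, ‖a k‖ ^ 2) ^ (Module.finrank ℤ Λ + 1)) := by
        rw [ENNReal.ofReal_mul (by positivity), ENNReal.ofReal_pow hnorm,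
          ENNReal.ofReal_tsum_of_nonneg (fun k => by positivity) ha]
        norm_cast
        simp only [ENNReal.ofReal_pow, norm_nonneg, ofReal_norm]

/-- If `u` has Fourier support in a submodule `Λ ⊆ ℤ^d` of rank `δ ≥ 1`, then
`b_u(l,s) = 0` for `l ∉ Λ` and `Σ_{(l,s)} |b_u(l,s)|^{δ+1} ≤ 2^δ ‖u‖^{2(δ+1)}`. -/
theorem tsum_bcoef_pow_le_of_support_submodule (d δ : ℕ) (hd : 1 ≤ d) (hδ : 1 ≤ δ)
    (Λ : Submodule ℤ (Fin d → ℤ)) (hrk : Module.finrank ℤ Λ = δ)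
    (a : (Fin d → ℤ) → ℂ) (ha : Summable fun k : Fin d → ℤ => ‖a k‖ ^ 2)
    (hsupp : ∀ k : Fin d → ℤ, k ∉ Λ → a k = 0) :
    (∀ l : Fin d → ℤ, l ∉ Λ → ∀ s : ℤ, bcoef a l s = 0) ∧
      (Summable fun ls : (Fin d → ℤ) × ℤ => ‖bcoef a ls.1 ls.2‖ ^ (δ + 1)) ∧
      (∑' ls : (Fin d → ℤ) × ℤ, ‖bcoef a ls.1 ls.2‖ ^ (δ + 1)) ≤
        2 ^ δ * (∑' k : Fin d → ℤ, ‖a k‖ ^ 2) ^ (δ + 1) := by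
  subst hrk
  obtain ⟨hzero, hsum, hle⟩ := tsum_bcoef_pow_le_of_support_submodule_general Λ a ha hsupp
  exact ⟨hzero, hsum, hle.trans (by gcongr; exact_mod_cast Nat.lt_two_pow_self)⟩
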